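/- Let γ, γ′ : ℂ⁵ → ℂ be twice continuously differentiable and suppose V₀₁′γ′ = V₀₀′γ and V₁₁′γ′ = V₁₀′γ on ℂ⁵. Then V₀₁′(V₁₀′γ′) = V₁₁′(V₀₀′γ′), i.e. the 1-form Λ = V₀₀′γ′·θ^{01′} + V₁₀′γ′·θ^{11′} is d₁-closed. Dually, if V₀₀′γ′ = V₀₁′γ and V₁₀′γ′ = V₁₁′γ on ℂ⁵, then V₀₀′(V₁₁′γ′) = V₁₀′(V₀₁′γ′), i.e. the 1-form Λ̃ = V₀₁′γ′·θ^{00′} + V₁₁′γ′·θ^{10′} is d₀-closed. -/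

import Mathlib

/-- Complex partial derivative in the `i`-th coordinate direction on `ℂ⁵`. -/
noncomputable def pd (i : Fin 5) (f : (Fin 5 → ℂ) → ℂ) (y : Fin 5 → ℂ) : ℂ :=
  fderiv ℂ f y (Pi.single i 1)

/-- Coordinates on `ℂ⁵` are `(y₀₀′, y₁₀′, y₀₁′, y₁₁′, t)`, with indices `0,1,2,3,4`. -/
noncomputable def V00 (f : (Fin 5 → ℂ) → ℂ) (y : Fin 5 → ℂ) : ℂ := pd 0 f y - y 3 * pd 4 f y
noncomputable def V01 (f : (Fin 5 → ℂ) → ℂ) (y : Fin 5 → ℂ) : ℂ := pd 2 f y + y 1 * pd 4 f y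
noncomputable def V10 (f : (Fin 5 → ℂ) → ℂ) (y : Fin 5 → ℂ) : ℂ := pd 1 f y - y 2 * pd 4 f y
noncomputable def V11 (f : (Fin 5 → ℂ) → ℂ) (y : Fin 5 → ℂ) : ℂ := pd 3 f y + y 0 * pd 4 f y
noncomputable def T5 (f : (Fin 5 → ℂ) → ℂ) (y : Fin 5 → ℂ) : ℂ := pd 4 f y

theorem differentiable_pd {f : (Fin 5 → ℂ) → ℂ} (hf : ContDiff ℂ 2 f) (i : Fin 5) :
    Differentiable ℂ (pd i f) :=
  ((hf.fderiv_right (m := 1) (by norm_num)).differentiable one_ne_zero).clm_apply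
    (differentiable_const _)

theorem pd_pd_eq {f : (Fin 5 → ℂ) → ℂ} (hf : ContDiff ℂ 2 f) (i j : Fin 5) (y : Fin 5 → ℂ) :
    pd i (pd j f) y = fderiv ℂ (fderiv ℂ f) y (Pi.single i 1) (Pi.single j 1) := by
  have hd : DifferentiableAt ℂ (fderiv ℂ f) y :=
    (hf.fderiv_right (m := 1) (by norm_num)).differentiable one_ne_zero y
  change fderiv ℂ (fun z => fderiv ℂ f z (Pi.single j 1)) y (Pi.single i 1) = _
  rw [fderiv_clm_apply hd (differentiableAt_const _)]
  simp

theorem pd_comm {f : (Fin 5 → ℂ) → ℂ} (hf : ContDiff ℂ 2 f) (i j : Fin 5) (y : Fin 5 → ℂ) :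
    pd i (pd j f) y = pd j (pd i f) y := by
  rw [pd_pd_eq hf, pd_pd_eq hf]
  exact hf.contDiffAt.isSymmSndFDerivAt (by simp) _ _

theorem pd_coord_mul_pd {f : (Fin 5 → ℂ) → ℂ} (hf : ContDiff ℂ 2 f) (i j k : Fin 5)
    (y : Fin 5 → ℂ) :
    pd i (fun z => z j * pd k f z) y =
      y j * pd i (pd k f) y + pd k f y * (Pi.single i 1 : Fin 5 → ℂ) j := by
  have hc := hasFDerivAt_apply (𝕜 := ℂ) j y
  have h := hc.fun_mul (differentiable_pd hf k y).hasFDerivAt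
  rw [pd, h.fderiv]
  simp [pd]

theorem pd_add_coord_mul_pd {f : (Fin 5 → ℂ) → ℂ} (hf : ContDiff ℂ 2 f) (i a j k : Fin 5)
    (y : Fin 5 → ℂ) :
    pd i (fun z => pd a f z + z j * pd k f z) y = pd i (pd a f) y +
      (y j * pd i (pd k f) y + pd k f y * (Pi.single i 1 : Fin 5 → ℂ) j) := by
  rw [← pd_coord_mul_pd hf, pd, fderiv_fun_add (differentiable_pd hf a y)
    ((differentiableAt_apply j y).fun_mul (differentiable_pd hf k y))]
  rfl

theorem pd_sub_coord_mul_pd {f : (Fin 5 → ℂ) → ℂ} (hf : ContDiff ℂ 2 f) (i a j k : Fin 5)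
    (y : Fin 5 → ℂ) :
    pd i (fun z => pd a f z - z j * pd k f z) y = pd i (pd a f) y -
      (y j * pd i (pd k f) y + pd k f y * (Pi.single i 1 : Fin 5 → ℂ) j) := by
  rw [← pd_coord_mul_pd hf, pd, fderiv_fun_sub (differentiable_pd hf a y)
    ((differentiableAt_apply j y).fun_mul (differentiable_pd hf k y))]
  rfl

theorem pd_V00 {f : (Fin 5 → ℂ) → ℂ} (hf : ContDiff ℂ 2 f) (i : Fin 5) (y : Fin 5 → ℂ) :
    pd i (V00 f) y = pd i (pd 0 f) y -
      (y 3 * pd i (pd 4 f) y + pd 4 f y * (Pi.single i 1 : Fin 5 → ℂ) 3) :=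
  pd_sub_coord_mul_pd hf i 0 3 4 y

theorem pd_V01 {f : (Fin 5 → ℂ) → ℂ} (hf : ContDiff ℂ 2 f) (i : Fin 5) (y : Fin 5 → ℂ) :
    pd i (V01 f) y = pd i (pd 2 f) y +
      (y 1 * pd i (pd 4 f) y + pd 4 f y * (Pi.single i 1 : Fin 5 → ℂ) 1) :=
  pd_add_coord_mul_pd hf i 2 1 4 y

theorem pd_V10 {f : (Fin 5 → ℂ) → ℂ} (hf : ContDiff ℂ 2 f) (i : Fin 5) (y : Fin 5 → ℂ) :
    pd i (V10 f) y = pd i (pd 1 f) y -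
      (y 2 * pd i (pd 4 f) y + pd 4 f y * (Pi.single i 1 : Fin 5 → ℂ) 2) :=
  pd_sub_coord_mul_pd hf i 1 2 4 y

theorem pd_V11 {f : (Fin 5 → ℂ) → ℂ} (hf : ContDiff ℂ 2 f) (i : Fin 5) (y : Fin 5 → ℂ) :
    pd i (V11 f) y = pd i (pd 3 f) y +
      (y 0 * pd i (pd 4 f) y + pd 4 f y * (Pi.single i 1 : Fin 5 → ℂ) 0) :=
  pd_add_coord_mul_pd hf i 3 0 4 y

theorem V00_V10_comm {f : (Fin 5 → ℂ) → ℂ} (hf : ContDiff ℂ 2 f) (y : Fin 5 → ℂ) :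
    V00 (V10 f) y = V10 (V00 f) y := by
  rw [V00, V10, pd_V00 hf, pd_V00 hf, pd_V10 hf, pd_V10 hf, pd_comm hf 0 1, pd_comm hf 0 4,
    pd_comm hf 1 4]
  simp
  ring

theorem V01_V11_comm {f : (Fin 5 → ℂ) → ℂ} (hf : ContDiff ℂ 2 f) (y : Fin 5 → ℂ) :
    V01 (V11 f) y = V11 (V01 f) y := by
  rw [V01, V11, pd_V01 hf, pd_V01 hf, pd_V11 hf, pd_V11 hf, pd_comm hf 2 3, pd_comm hf 2 4,
    pd_comm hf 3 4]
  simp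
  ring

theorem V00_V11_eq {f : (Fin 5 → ℂ) → ℂ} (hf : ContDiff ℂ 2 f) (y : Fin 5 → ℂ) :
    V00 (V11 f) y = V11 (V00 f) y + 2 * T5 f y := by
  rw [V00, V11, pd_V00 hf, pd_V00 hf, pd_V11 hf, pd_V11 hf, pd_comm hf 0 3, pd_comm hf 0 4,
    pd_comm hf 3 4]
  simp [T5]
  ring

theorem V10_V01_eq {f : (Fin 5 → ℂ) → ℂ} (hf : ContDiff ℂ 2 f) (y : Fin 5 → ℂ) :
    V10 (V01 f) y = V01 (V10 f) y + 2 * T5 f y := by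
  rw [V10, V01, pd_V10 hf, pd_V10 hf, pd_V01 hf, pd_V01 hf, pd_comm hf 1 2, pd_comm hf 1 4,
    pd_comm hf 2 4]
  simp [T5]
  ring

/-- If `V₀₁′γ′ = V₀₀′γ` and `V₁₁′γ′ = V₁₀′γ` then the 1-form
`Λ = V₀₀′γ′·θ^{01′} + V₁₀′γ′·θ^{11′}` is `d₁`-closed, i.e.
`V₀₁′(V₁₀′γ′) = V₁₁′(V₀₀′γ′)`; dually for `d₀`. -/
theorem lambda_closedness (γ γ' : (Fin 5 → ℂ) → ℂ)
    (hγ : ContDiff ℂ 2 γ) (hγ' : ContDiff ℂ 2 γ') :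
    ((∀ y, V01 γ' y = V00 γ y) → (∀ y, V11 γ' y = V10 γ y) →
      ∀ y, V01 (V10 γ') y = V11 (V00 γ') y) ∧
    ((∀ y, V00 γ' y = V01 γ y) → (∀ y, V10 γ' y = V11 γ y) →
      ∀ y, V00 (V11 γ') y = V10 (V01 γ') y) := by
  constructor
  · intro h₀ h₁ y
    have e₀ : V01 γ' = V00 γ := funext h₀
    have e₁ : V11 γ' = V10 γ := funext h₁
    have c₀ := V10_V01_eq hγ' y
    have c₁ := V00_V11_eq hγ' y
    rw [e₀] at c₀
    rw [e₁] at c₁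
    linear_combination c₁ - c₀ - V00_V10_comm hγ y
  · intro h₀ h₁ y
    have e₀ : V00 γ' = V01 γ := funext h₀
    have e₁ : V10 γ' = V11 γ := funext h₁
    have c₀ := V00_V11_eq hγ' y
    have c₁ := V10_V01_eq hγ' y
    rw [e₀] at c₀
    rw [e₁] at c₁
    linear_combination c₀ - c₁ - V01_V11_comm hγ y
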